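/- For each k ≥ 1 and |q| < 1: Σ_{λ: l(λ) ≤ k} q^{2|λ| + 2n_2(λ) - 2λ_1^2 - λ_1} (-q;q)_{2λ_1} / ((-q^2;q^2)_{λ_k} (q^2;q^2)_λ) = ((-q;q)_∞ / (q;q)_∞) · (q^{4k}, q^{4k-1}, q; q^{4k})_∞. -/

import Mathlib

/-- Finite q-Pochhammer symbol `(x;q)_n = ∏_{k=0}^{n-1} (1 - x q^k)`. -/
noncomputable def qPoch (x q : ℂ) (n : ℕ) : ℂ := ∏ k ∈ Finset.range n, (1 - x * q ^ k)

/-- Infinite q-Pochhammer symbol `(x;q)_∞ = ∏_{k≥0} (1 - x q^k)`. -/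
noncomputable def qPochInf (x q : ℂ) : ℂ := ∏' k : ℕ, (1 - x * q ^ k)

/-- Partitions with at most `k` (positive) parts: antitone sequences of naturals vanishing
from index `k` on; `l 0` is the largest part `λ_1`, and `l (k-1)` is `λ_k`. -/
def PartK (k : ℕ) : Type := {l : ℕ → ℕ // Antitone l ∧ ∀ i, k ≤ i → l i = 0}

/-- `|λ| = Σ_i λ_i`. -/
def wtK (k : ℕ) (l : PartK k) : ℕ := ∑ i ∈ Finset.range k, l.1 i

/-- `n_2(λ) = Σ_i λ_i^2`. -/
def n2K (k : ℕ) (l : PartK k) : ℕ := ∑ i ∈ Finset.range k, (l.1 i) ^ 2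

/-- `n(λ) = Σ_i binom(λ_i, 2)`. -/
def nK (k : ℕ) (l : PartK k) : ℕ := ∑ i ∈ Finset.range k, Nat.choose (l.1 i) 2

/-- `(x;q)_λ = ∏_{i=1}^{k} (x;q)_{λ_i - λ_{i+1}}` (with `λ_{k+1} = 0`). -/
noncomputable def pochK (x q : ℂ) (k : ℕ) (l : PartK k) : ℂ :=
  ∏ i ∈ Finset.range k, qPoch x q (l.1 i - l.1 (i + 1))


open Filter Topology

theorem qPoch_zero (x q : ℂ) : qPoch x q 0 = 1 := by simp [qPoch]

theorem qPoch_succ (x q : ℂ) (n : ℕ) :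
    qPoch x q (n + 1) = qPoch x q n * (1 - x * q ^ n) := by
  simp [qPoch, Finset.prod_range_succ]

theorem qPoch_add (x q : ℂ) (m n : ℕ) :
    qPoch x q (m + n) = qPoch x q m * qPoch (x * q ^ m) q n := by
  simp only [qPoch, Finset.prod_range_add]
  congr 1
  refine Finset.prod_congr rfl fun i _ => ?_
  rw [pow_add]; ring

theorem qPoch_two_mul (x q : ℂ) (n : ℕ) :
    qPoch x q (2 * n) = qPoch x (q ^ 2) n * qPoch (x * q) (q ^ 2) n := by
  induction n with
  | zero => simp [qPoch]
  | succ n ih =>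
    rw [show 2 * (n + 1) = 2 * n + 1 + 1 by ring, qPoch_succ, qPoch_succ, ih, qPoch_succ, qPoch_succ]
    rw [← pow_mul]
    ring

theorem one_sub_ne {x : ℂ} (hx : ‖x‖ < 1) : 1 - x ≠ 0 := by
  intro h
  have : x = 1 := by linear_combination -h
  rw [this] at hx
  simp at hx

theorem norm_mul_pow_lt {x q : ℂ} (hx : ‖x‖ < 1) (hq : ‖q‖ < 1) (n : ℕ) : ‖x * q ^ n‖ < 1 := by
  rw [norm_mul, norm_pow]
  calc ‖x‖ * ‖q‖ ^ n ≤ ‖x‖ * 1 := by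
        gcongr
        exact pow_le_one₀ (norm_nonneg _) hq.le
    _ < 1 := by simpa using hx

theorem qPoch_ne {x q : ℂ} (hx : ‖x‖ < 1) (hq : ‖q‖ < 1) (n : ℕ) : qPoch x q n ≠ 0 :=
  Finset.prod_ne_zero_iff.2 fun _ _ => one_sub_ne (norm_mul_pow_lt hx hq _)

theorem qsummable (x : ℂ) {q : ℂ} (hq : ‖q‖ < 1) : Summable fun k : ℕ => ‖-(x * q ^ k)‖ := by
  simp only [norm_neg, norm_mul, norm_pow]
  exact (summable_geometric_of_lt_one (norm_nonneg _) hq).mul_left _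

theorem qPoch_tendsto (x : ℂ) {q : ℂ} (hq : ‖q‖ < 1) :
    Tendsto (fun n => qPoch x q n) atTop (𝓝 (qPochInf x q)) := by
  have h := (multipliable_one_add_of_summable (qsummable x hq)).tendsto_prod_tprod_nat
  simpa [qPoch, qPochInf, sub_eq_add_neg] using h

theorem qPochInf_ne {x q : ℂ} (hx : ‖x‖ < 1) (hq : ‖q‖ < 1) : qPochInf x q ≠ 0 := by
  have h := tprod_one_add_ne_zero_of_summable (f := fun k : ℕ => -(x * q ^ k))
    (fun k => by
      have := one_sub_ne (norm_mul_pow_lt hx hq k)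
      simpa [sub_eq_add_neg] using this) (qsummable x hq)
  simpa [qPochInf, sub_eq_add_neg] using h

theorem qPoch_mul_inf (x : ℂ) {q : ℂ} (hq : ‖q‖ < 1) (n : ℕ) :
    qPoch x q n * qPochInf (x * q ^ n) q = qPochInf x q := by
  have h1 := (qPoch_tendsto (x * q ^ n) hq).const_mul (qPoch x q n)
  have h2 := (tendsto_add_atTop_iff_nat n).2 (qPoch_tendsto x hq)
  refine tendsto_nhds_unique h1 (h2.congr fun m => ?_)
  rw [add_comm, qPoch_add]

theorem norm_sq_lt {q : ℂ} (hq : ‖q‖ < 1) : ‖q ^ 2‖ < 1 := by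
  rw [norm_pow]; exact pow_lt_one₀ (norm_nonneg _) hq (by norm_num)

theorem qPochInf_split (x : ℂ) {q : ℂ} (hq : ‖q‖ < 1) :
    qPochInf x (q ^ 2) * qPochInf (x * q) (q ^ 2) = qPochInf x q := by
  have h1 := (qPoch_tendsto x (norm_sq_lt hq)).mul (qPoch_tendsto (x * q) (norm_sq_lt hq))
  have h2 := (qPoch_tendsto x hq).comp (tendsto_id.const_mul_atTop' (r := 2) (by norm_num))
  refine tendsto_nhds_unique h1 (h2.congr fun m => ?_)
  simp only [Function.comp, id]
  rw [qPoch_two_mul]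

theorem tendsto_bdd {f : ℕ → ℂ} {a : ℂ} (h : Tendsto f atTop (𝓝 a)) :
    ∃ M : ℝ, 0 < M ∧ ∀ n, ‖f n‖ ≤ M := by
  obtain ⟨M, hM⟩ := (Metric.isBounded_range_of_tendsto f h).exists_norm_le
  refine ⟨max M 1, by positivity, fun n => (hM _ ⟨n, rfl⟩).trans (le_max_left _ _)⟩

theorem qPoch_bdd (x : ℂ) {q : ℂ} (hq : ‖q‖ < 1) : ∃ M : ℝ, 0 < M ∧ ∀ n, ‖qPoch x q n‖ ≤ M :=
  tendsto_bdd (qPoch_tendsto x hq)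

theorem qPoch_inv_bdd {x q : ℂ} (hx : ‖x‖ < 1) (hq : ‖q‖ < 1) :
    ∃ M : ℝ, 0 < M ∧ ∀ n, ‖(qPoch x q n)⁻¹‖ ≤ M :=
  tendsto_bdd ((qPoch_tendsto x hq).inv₀ (qPochInf_ne hx hq))

/-! q-Gauss -/

noncomputable def gT (A B Q z : ℂ) (m : ℕ) : ℂ :=
  qPoch A Q m * qPoch B Q m * z ^ m * ((qPoch Q Q m)⁻¹ * (qPoch (A * B * z) Q m)⁻¹)

theorem norm_mul_lt {A z : ℂ} (hA : ‖A‖ ≤ 1) (hz : ‖z‖ < 1) : ‖A * z‖ < 1 := by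
  rw [norm_mul]
  calc ‖A‖ * ‖z‖ ≤ 1 * ‖z‖ := by gcongr
    _ < 1 := by simpa using hz

/-- uniform bound -/
theorem gT_bdd {A B Q z : ℂ} (hA : ‖A‖ ≤ 1) (hB : ‖B‖ ≤ 1) (hQ : ‖Q‖ < 1) (hz : ‖z‖ < 1) :
    ∃ M : ℝ, 0 < M ∧ ∀ N m, ‖gT A B Q (z * Q ^ N) m‖ ≤ M * (‖z‖ * ‖Q‖ ^ N) ^ m := by
  obtain ⟨M1, h1, H1⟩ := qPoch_bdd A hQ
  obtain ⟨M2, h2, H2⟩ := qPoch_bdd B hQ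
  obtain ⟨M3, h3, H3⟩ := qPoch_inv_bdd hQ hQ
  have hc : ‖A * B * z‖ < 1 := by
    rw [mul_assoc]; exact norm_mul_lt hA (norm_mul_lt hB hz)
  obtain ⟨M4, h4, H4⟩ := qPoch_inv_bdd hc hQ
  obtain ⟨M5, h5, H5⟩ := qPoch_bdd (A * B * z) hQ
  refine ⟨M1 * M2 * (M3 * (M4 * M5)), by positivity, fun N m => ?_⟩
  have e : (qPoch (A * B * (z * Q ^ N)) Q m)⁻¹ =
      (qPoch (A * B * z) Q (N + m))⁻¹ * qPoch (A * B * z) Q N := by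
    rw [qPoch_add, ← mul_assoc (A * B)]
    have := qPoch_ne hc hQ N
    field_simp
  unfold gT
  rw [e]
  simp only [norm_mul, norm_pow]
  calc _ ≤ M1 * M2 * (‖z‖ * ‖Q‖ ^ N) ^ m * (M3 * (M4 * M5)) := by
        gcongr
        exacts [H1 _, H2 _, H3 _, H4 _, H5 _]
    _ = _ := by ring

theorem gT_summable {A B Q z : ℂ} (hA : ‖A‖ ≤ 1) (hB : ‖B‖ ≤ 1) (hQ : ‖Q‖ < 1) (hz : ‖z‖ < 1) :
    Summable (gT A B Q z) := by
  obtain ⟨M, h, H⟩ := gT_bdd hA hB hQ hz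
  refine Summable.of_norm_bounded ((summable_geometric_of_lt_one (norm_nonneg z) hz).mul_left M) ?_
  intro m
  simpa using H 0 m

theorem gT_step {A B Q z : ℂ} (hA : ‖A‖ ≤ 1) (hB : ‖B‖ ≤ 1) (hQ : ‖Q‖ < 1) (hz : ‖z‖ < 1) :
    (1 - A * B * z) * (1 - z) * ∑' m, gT A B Q z m =
      (1 - A * z) * (1 - B * z) * ∑' m, gT A B Q (z * Q) m := by
  have hc : ‖A * B * z‖ < 1 := by
    rw [mul_assoc]; exact norm_mul_lt hA (norm_mul_lt hB hz)
  have hzQ : ‖z * Q‖ < 1 := norm_mul_lt hz.le hQ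
  have hs1 := gT_summable hA hB hQ hz
  have hs2 := gT_summable hA hB hQ hzQ
  set G : ℕ → ℂ := fun m => (1 - A * B * z) * (1 - Q ^ m) * gT A B Q z m with hG
  have hGs : Summable G := by
    have e : G = fun m => (1 - A * B * z) * gT A B Q z m
        - (1 - A * B * z) * (gT A B Q z m * Q ^ m) := by
      funext m; simp only [hG]; ring
    rw [e]
    refine (hs1.mul_left _).sub (Summable.mul_left _ ?_)
    refine Summable.of_norm_bounded hs1.norm fun m => ?_
    rw [norm_mul, norm_pow]
    exact mul_le_of_le_one_right (norm_nonneg _) (pow_le_one₀ (norm_nonneg _) hQ.le)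
  have key : ∀ m, (1 - A * B * z) * (1 - z) * gT A B Q z m
      - (1 - A * z) * (1 - B * z) * gT A B Q (z * Q) m = G m - G (m + 1) := by
    intro m
    have hcm : ∀ m, qPoch (A * B * z) Q m ≠ 0 := qPoch_ne hc hQ
    have hQm : ∀ m, qPoch Q Q m ≠ 0 := qPoch_ne hQ hQ
    have e1 : qPoch (A * B * z) Q m * (1 - A * B * z * Q ^ m)
        = (1 - A * B * z) * qPoch (A * B * (z * Q)) Q m := by
      rw [← qPoch_succ, add_comm, qPoch_add]
      simp [qPoch, mul_assoc]
    have n1 : 1 - A * B * z * Q ^ m ≠ 0 := one_sub_ne (norm_mul_pow_lt hc hQ m)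
    have n2 : 1 - Q * Q ^ m ≠ 0 := one_sub_ne (norm_mul_pow_lt hQ hQ m)
    have n3 : 1 - A * B * z ≠ 0 := one_sub_ne hc
    have e2 : (qPoch (A * B * (z * Q)) Q m)⁻¹ =
        (1 - A * B * z) / (1 - A * B * z * Q ^ m) * (qPoch (A * B * z) Q m)⁻¹ := by
      have : qPoch (A * B * (z * Q)) Q m = qPoch (A * B * z) Q m * (1 - A * B * z * Q ^ m)
        / (1 - A * B * z) := by rw [e1]; field_simp
      rw [this]
      have := hcm m
      field_simp
    simp only [hG, gT]
    rw [e2]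
    simp only [qPoch_succ]
    have := hcm m
    have := hQm m
    rw [mul_pow, pow_succ Q m, pow_succ z m]
    clear e1 e2
    generalize Q ^ m = X at *
    generalize hD1 : 1 - Q * X = D1 at n2 ⊢
    generalize hD2 : 1 - A * B * z * X = D2 at n1 ⊢
    field_simp
    rw [← hD1, ← hD2]
    ring
  have h1 : ∑' m, (G m - G (m + 1)) = 0 := by
    rw [hGs.tsum_sub ((summable_nat_add_iff 1).2 hGs), hGs.tsum_eq_zero_add]
    simp [hG]
  rw [← tsum_mul_left, ← tsum_mul_left, ← sub_eq_zero,
    ← (hs1.mul_left _).tsum_sub (hs2.mul_left _), ← h1]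
  exact tsum_congr key

theorem gT_iter {A B Q z : ℂ} (hA : ‖A‖ ≤ 1) (hB : ‖B‖ ≤ 1) (hQ : ‖Q‖ < 1) (hz : ‖z‖ < 1) (N : ℕ) :
    qPoch (A * B * z) Q N * qPoch z Q N * ∑' m, gT A B Q z m =
      qPoch (A * z) Q N * qPoch (B * z) Q N * ∑' m, gT A B Q (z * Q ^ N) m := by
  induction N with
  | zero => simp [qPoch]
  | succ N ih =>
    have h := gT_step hA hB hQ (norm_mul_pow_lt hz hQ N)
    simp only [qPoch_succ]
    rw [show z * Q ^ (N + 1) = z * Q ^ N * Q by ring]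
    linear_combination (1 - A * B * z * Q ^ N) * (1 - z * Q ^ N) * ih +
      qPoch (A * z) Q N * qPoch (B * z) Q N * h

theorem q_gauss {A B Q z : ℂ} (hA : ‖A‖ ≤ 1) (hB : ‖B‖ ≤ 1) (hQ : ‖Q‖ < 1) (hz : ‖z‖ < 1) :
    qPochInf (A * B * z) Q * qPochInf z Q * ∑' m, gT A B Q z m =
      qPochInf (A * z) Q * qPochInf (B * z) Q := by
  obtain ⟨M, h, H⟩ := gT_bdd hA hB hQ hz
  have hlim : Tendsto (fun N => ∑' m, gT A B Q (z * Q ^ N) m) atTop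
      (𝓝 (∑' m, if m = 0 then (1 : ℂ) else 0)) := by
    refine tendsto_tsum_of_dominated_convergence (bound := fun m => M * ‖z‖ ^ m)
      ((summable_geometric_of_lt_one (norm_nonneg z) hz).mul_left M) ?_ ?_
    · intro m
      by_cases hm : m = 0
      · subst hm
        simp [gT, qPoch]
      · simp only [hm, if_false]
        rw [tendsto_zero_iff_norm_tendsto_zero]
        have h0 : Tendsto (fun N : ℕ => M * (‖z‖ * ‖Q‖ ^ N) ^ m) atTop
            (𝓝 (M * (‖z‖ * 0) ^ m)) :=
          (((tendsto_pow_atTop_nhds_zero_of_lt_one (norm_nonneg _) hQ).const_mul _).pow m).const_mul _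
        rw [mul_zero, zero_pow hm, mul_zero] at h0
        exact squeeze_zero (fun _ => norm_nonneg _) (fun N => H N m) h0
    · refine Eventually.of_forall fun N m => (H N m).trans ?_
      gcongr
      exact mul_le_of_le_one_right (norm_nonneg _) (pow_le_one₀ (norm_nonneg _) hQ.le)
  rw [tsum_ite_eq] at hlim
  have l1 := ((qPoch_tendsto (A * B * z) hQ).mul (qPoch_tendsto z hQ)).mul_const
    (∑' m, gT A B Q z m)
  have l2 := ((qPoch_tendsto (A * z) hQ).mul (qPoch_tendsto (B * z) hQ)).mul hlim
  rw [mul_one] at l2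
  exact tendsto_nhds_unique l1 (l2.congr fun N => (gT_iter hA hB hQ hz N).symm)

/-! Bailey -/

/-- q-Vandermonde -/
theorem q_vander {Q : ℂ} (hQ : ‖Q‖ < 1) (N : ℕ) : ∀ c : ℕ,
    ∑ j ∈ Finset.range (N + 1), Q ^ (j * (j + c)) *
      ((qPoch Q Q j)⁻¹ * (qPoch Q Q (N - j))⁻¹ * (qPoch Q Q (j + c))⁻¹) =
      (qPoch Q Q N)⁻¹ * (qPoch Q Q (N + c))⁻¹ := by
  have hn : ∀ m, qPoch Q Q m ≠ 0 := qPoch_ne hQ hQ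
  have h1 : ∀ m, 1 - Q * Q ^ m ≠ 0 := fun m => one_sub_ne (norm_mul_pow_lt hQ hQ m)
  induction N with
  | zero => intro c; simp [qPoch]
  | succ N ih =>
    intro c
    have key : (1 - Q * Q ^ N) * ∑ j ∈ Finset.range (N + 1 + 1), Q ^ (j * (j + c)) *
      ((qPoch Q Q j)⁻¹ * (qPoch Q Q (N + 1 - j))⁻¹ * (qPoch Q Q (j + c))⁻¹) =
      ∑ j ∈ Finset.range (N + 1), Q ^ (j * (j + (c + 1))) *
      ((qPoch Q Q j)⁻¹ * (qPoch Q Q (N - j))⁻¹ * (qPoch Q Q (j + (c + 1)))⁻¹) := by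
      set F : ℕ → ℂ := fun j => Q ^ (j * (j + c)) * (qPoch Q Q (j + c))⁻¹ *
        ((qPoch Q Q j)⁻¹ * (qPoch Q Q (N + 1 - j))⁻¹) with hF
      have e1 : (1 - Q * Q ^ N) * ∑ j ∈ Finset.range (N + 1 + 1), Q ^ (j * (j + c)) *
        ((qPoch Q Q j)⁻¹ * (qPoch Q Q (N + 1 - j))⁻¹ * (qPoch Q Q (j + c))⁻¹) =
        ∑ j ∈ Finset.range (N + 1 + 1), Q ^ j * (1 - Q ^ (N + 1 - j)) * F j +
        ∑ j ∈ Finset.range (N + 1 + 1), (1 - Q ^ j) * F j := by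
        rw [Finset.mul_sum, ← Finset.sum_add_distrib]
        refine Finset.sum_congr rfl fun j hj => ?_
        have hj' : j ≤ N + 1 := by simpa [Nat.lt_succ_iff] using hj
        have : Q * Q ^ N = Q ^ j * Q ^ (N + 1 - j) := by
          rw [← pow_add, ← pow_succ']; congr 1; omega
        rw [this]
        simp only [hF]
        ring
      rw [e1, Finset.sum_range_succ, Finset.sum_range_succ' (fun j => (1 - Q ^ j) * F j)]
      simp only [Nat.sub_self, pow_zero, sub_self, mul_zero, zero_mul, add_zero]
      rw [← Finset.sum_add_distrib]
      refine Finset.sum_congr rfl fun j hj => ?_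
      have hj' : j ≤ N := by simpa [Nat.lt_succ_iff] using hj
      obtain ⟨d, rfl⟩ := Nat.exists_eq_add_of_le hj'
      simp only [hF]
      rw [show j + d + 1 - j = d + 1 by omega, show j + d + 1 - (j + 1) = d by omega,
        show j + d - j = d by omega, show j + 1 + c = j + c + 1 by ring,
        show j + (c + 1) = j + c + 1 by ring]
      simp only [qPoch_succ]
      have := hn j
      have := hn d
      have := hn (j + c)
      have a1 := h1 j
      have a2 := h1 d
      have a3 := h1 (j + c)
      rw [show Q ^ ((j + 1) * (j + c + 1)) = Q ^ (j * (j + c)) * Q ^ j * (Q * Q ^ (j + c)) by ring,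
        show Q ^ (j * (j + c + 1)) = Q ^ (j * (j + c)) * Q ^ j by ring, pow_succ' Q j, pow_succ' Q d]
      generalize Q ^ (j * (j + c)) = E
      generalize Q ^ (j + c) = Z at *
      generalize Q ^ j = X at *
      generalize Q ^ d = Y at *
      generalize hD1 : 1 - Q * X = D1 at a1 ⊢
      generalize hD2 : 1 - Q * Y = D2 at a2 ⊢
      generalize hD3 : 1 - Q * Z = D3 at a3 ⊢
      field_simp
      rw [← hD3]
      ring
    rw [ih (c + 1)] at key
    have := h1 N
    rw [show N + 1 + c = N + (c + 1) by ring, qPoch_succ Q Q N, mul_inv, mul_assoc, mul_left_comm, ← key]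
    field_simp

/-- the initial Bailey pair -/
theorem bailey_init {Q : ℂ} (hQ : ‖Q‖ < 1) (n : ℕ) :
    ∑ r ∈ Finset.range (n + 1), (-1) ^ r * Q ^ (r ^ 2) * (1 - Q ^ (2 * r + 1)) *
      ((qPoch Q Q (n - r))⁻¹ * (qPoch Q Q (n + r + 1))⁻¹) =
      (qPoch (-Q) Q n)⁻¹ * (qPoch Q Q n)⁻¹ := by
  have hn : ∀ m, qPoch Q Q m ≠ 0 := qPoch_ne hQ hQ
  have h1 : ∀ m, 1 - Q * Q ^ m ≠ 0 := fun m => one_sub_ne (norm_mul_pow_lt hQ hQ m)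
  have h2 : ∀ m, 1 - -Q * Q ^ m ≠ 0 := fun m =>
    one_sub_ne (norm_mul_pow_lt (by simpa using hQ) hQ m)
  induction n with
  | zero =>
    simp [qPoch]
    exact mul_inv_cancel₀ (by simpa using h1 0)
  | succ n ih =>
    set V : ℕ → ℂ := fun r => (-1) ^ r * Q ^ (n + 1) * Q ^ (r * (r - 1)) * (1 - Q ^ (2 * r)) *
      ((qPoch Q Q (n + 1 - r))⁻¹ * (qPoch Q Q (n + r + 1))⁻¹) with hV
    have key : (1 - Q * Q ^ n) * (1 + Q * Q ^ n) *
      ∑ r ∈ Finset.range (n + 1 + 1), (-1) ^ r * Q ^ (r ^ 2) * (1 - Q ^ (2 * r + 1)) *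
      ((qPoch Q Q (n + 1 - r))⁻¹ * (qPoch Q Q (n + 1 + r + 1))⁻¹) =
      ∑ r ∈ Finset.range (n + 1), (-1) ^ r * Q ^ (r ^ 2) * (1 - Q ^ (2 * r + 1)) *
      ((qPoch Q Q (n - r))⁻¹ * (qPoch Q Q (n + r + 1))⁻¹) := by
      rw [Finset.sum_range_succ, mul_add, Finset.mul_sum]
      have last : (1 - Q * Q ^ n) * (1 + Q * Q ^ n) *
        ((-1) ^ (n + 1) * Q ^ ((n + 1) ^ 2) * (1 - Q ^ (2 * (n + 1) + 1)) *
        ((qPoch Q Q (n + 1 - (n + 1)))⁻¹ * (qPoch Q Q (n + 1 + (n + 1) + 1))⁻¹)) = V (n + 1) := by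
        simp only [hV]
        rw [Nat.sub_self, show n + 1 + (n + 1) + 1 = (2 * n + 2) + 1 by ring, qPoch_succ,
          show n + (n + 1) + 1 = 2 * n + 2 by ring, Nat.add_sub_cancel]
        have a1 := h1 (2 * n + 2)
        have := hn (2 * n + 2)
        rw [show 2 * (n + 1) + 1 = 2 * n + 2 + 1 by ring, pow_succ' Q (2 * n + 2),
          show (n + 1) ^ 2 = n + 1 + (n + 1) * n by ring, pow_add Q (n + 1)]
        rw [show Q ^ (2 * (n + 1)) = (Q * Q ^ n) ^ 2 by ring]
        generalize Q ^ (2 * n + 2) = X at *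
        field_simp
        ring
      have tel : ∑ r ∈ Finset.range (n + 1), (V r - V (r + 1)) = V 0 - V (n + 1) :=
        Finset.sum_range_sub' V (n + 1)
      have V0 : V 0 = 0 := by simp [hV]
      rw [last, show V (n + 1) = - ∑ r ∈ Finset.range (n + 1), (V r - V (r + 1)) by
        rw [tel, V0]; ring, ← sub_eq_add_neg, ← Finset.sum_sub_distrib]
      refine Finset.sum_congr rfl fun r hr => ?_
      have hr' : r ≤ n := by simpa [Nat.lt_succ_iff] using hr
      obtain ⟨d, rfl⟩ := Nat.exists_eq_add_of_le hr'
      simp only [hV]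
      rw [show r + d + 1 - r = d + 1 by omega, show r + d + 1 - (r + 1) = d by omega,
        show r + d - r = d by omega, show r + d + 1 + r + 1 = r + d + r + 1 + 1 by ring,
        show r + d + (r + 1) + 1 = r + d + r + 1 + 1 by ring, Nat.add_sub_cancel]
      rw [qPoch_succ Q Q (r + d + r + 1), qPoch_succ Q Q d]
      have := hn d
      have := hn (r + d + r + 1)
      have a2 := h1 d
      have a3 := h1 (r + d + r + 1)
      have e0 : Q ^ (r ^ 2) = Q ^ (r * (r - 1)) * Q ^ r := by
        rw [← pow_add]; congr 1
        cases r with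
        | zero => rfl
        | succ r => simp; ring
      have e1 : Q ^ ((r + 1) * r) = Q ^ (r * (r - 1)) * Q ^ r * Q ^ r := by
        rw [← e0]; ring
      rw [e0, e1]
      rw [show Q ^ (r + d + r + 1) = Q * (Q ^ r * Q ^ r * Q ^ d) by ring] at *
      rw [show Q ^ (2 * r + 1) = Q * (Q ^ r * Q ^ r) by ring,
        show Q ^ (2 * (r + 1)) = Q * Q * (Q ^ r * Q ^ r) by ring,
        show Q ^ (2 * r) = Q ^ r * Q ^ r by ring, show Q ^ (r + d + 1) = Q * (Q ^ r * Q ^ d) by ring,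
        show Q ^ (r + d) = (Q ^ r * Q ^ d) by ring, pow_succ (-1 : ℂ) r]
      generalize Q ^ (r * (r - 1)) = E
      generalize Q ^ r = X at *
      generalize Q ^ d = Y at *
      generalize (-1 : ℂ) ^ r = S at *
      generalize qPoch Q Q (r + d + r + 1) = P at *
      generalize hD2 : 1 - Q * Y = D2 at a2 ⊢
      generalize hD3 : 1 - Q * (Q * (X * X * Y)) = D3 at a3 ⊢
      field_simp
      rw [← hD2, ← hD3]
      ring
    rw [ih] at key
    have a1 := h1 n
    have a2 := h2 n
    rw [qPoch_succ, qPoch_succ, mul_inv, mul_inv, mul_mul_mul_comm, ← key]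
    rw [neg_mul, sub_neg_eq_add] at *
    field_simp

noncomputable def bB (Q : ℂ) : ℕ → ℕ → ℂ
  | 0, n => (qPoch (-Q) Q n)⁻¹ * (qPoch Q Q n)⁻¹
  | k + 1, n => ∑ m ∈ Finset.range (n + 1), Q ^ (m ^ 2 + m) * (qPoch Q Q (n - m))⁻¹ * bB Q k m

theorem bailey_chain {Q : ℂ} (hQ : ‖Q‖ < 1) (k : ℕ) : ∀ n : ℕ,
    bB Q k n = ∑ r ∈ Finset.range (n + 1),
      (-1) ^ r * Q ^ (r ^ 2 + k * (r ^ 2 + r)) * (1 - Q ^ (2 * r + 1)) *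
      ((qPoch Q Q (n - r))⁻¹ * (qPoch Q Q (n + r + 1))⁻¹) := by
  induction k with
  | zero => intro n; simp only [bB]; rw [← bailey_init hQ n]; simp
  | succ k ih =>
    intro n
    simp only [bB]
    calc _ = ∑ m ∈ Finset.range (n + 1), ∑ r ∈ Finset.range (m + 1),
          (-1) ^ r * Q ^ (r ^ 2 + k * (r ^ 2 + r)) * (1 - Q ^ (2 * r + 1)) * (Q ^ (m ^ 2 + m) *
          ((qPoch Q Q (n - m))⁻¹ * (qPoch Q Q (m - r))⁻¹ * (qPoch Q Q (m + r + 1))⁻¹)) := by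
          refine Finset.sum_congr rfl fun m _ => ?_
          rw [ih, Finset.mul_sum]
          refine Finset.sum_congr rfl fun r _ => ?_
          ring
      _ = ∑ r ∈ Finset.range (n + 1), ∑ m ∈ Finset.Ico r (n + 1),
          (-1) ^ r * Q ^ (r ^ 2 + k * (r ^ 2 + r)) * (1 - Q ^ (2 * r + 1)) * (Q ^ (m ^ 2 + m) *
          ((qPoch Q Q (n - m))⁻¹ * (qPoch Q Q (m - r))⁻¹ * (qPoch Q Q (m + r + 1))⁻¹)) := by
          refine Finset.sum_comm' fun m r => ?_
          simp only [Finset.mem_range, Finset.mem_Ico]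
          omega
      _ = _ := by
          refine Finset.sum_congr rfl fun r hr => ?_
          have hr' : r ≤ n := by simpa [Nat.lt_succ_iff] using hr
          obtain ⟨d, rfl⟩ := Nat.exists_eq_add_of_le hr'
          rw [← Finset.mul_sum, Finset.sum_Ico_eq_sum_range, show r + d + 1 - r = d + 1 by omega,
            show r + d - r = d by omega]
          have h := q_vander hQ d (2 * r + 1)
          have : ∑ i ∈ Finset.range (d + 1), Q ^ ((r + i) ^ 2 + (r + i)) *
              ((qPoch Q Q (r + d - (r + i)))⁻¹ * (qPoch Q Q (r + i - r))⁻¹ *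
                (qPoch Q Q (r + i + r + 1))⁻¹) = Q ^ (r ^ 2 + r) *
                ((qPoch Q Q d)⁻¹ * (qPoch Q Q (r + d + r + 1))⁻¹) := by
            rw [show r + d + r + 1 = d + (2 * r + 1) by ring, ← h, Finset.mul_sum]
            refine Finset.sum_congr rfl fun i _ => ?_
            rw [show r + d - (r + i) = d - i by omega, show r + i - r = i by omega,
              show r + i + r + 1 = i + (2 * r + 1) by ring]
            ring
          rw [this]
          ring

/-! Jacobi triple product -/

noncomputable def ic (p : ℂ) (m : ℤ) : ℂ := if m < 0 then 0 else (qPoch p p m.toNat)⁻¹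

theorem ic_nat (p : ℂ) (n : ℕ) : ic p n = (qPoch p p n)⁻¹ := by simp [ic]

theorem ic_rec {p : ℂ} (hp : ‖p‖ < 1) (m : ℤ) : ic p (m - 1) = (1 - p ^ m) * ic p m := by
  rcases lt_trichotomy m 0 with h | h | h
  · simp [ic, h, show m - 1 < 0 by omega]
  · subst h; simp [ic]
  · obtain ⟨n, rfl⟩ : ∃ n : ℕ, m = n + 1 := ⟨(m - 1).toNat, by omega⟩
    rw [show (n : ℤ) + 1 - 1 = (n : ℕ) by ring, show (n : ℤ) + 1 = ((n + 1 : ℕ) : ℤ) by push_cast; ring,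
      ic_nat, ic_nat, zpow_natCast, qPoch_succ, pow_succ', mul_inv]
    have := one_sub_ne (norm_mul_pow_lt hp hp n)
    field_simp

theorem ic_bdd {p : ℂ} (hp : ‖p‖ < 1) : ∃ M : ℝ, 0 < M ∧ ∀ m, ‖ic p m‖ ≤ M := by
  obtain ⟨M, h, H⟩ := qPoch_inv_bdd hp hp
  refine ⟨M, h, fun m => ?_⟩
  unfold ic
  split_ifs
  · simpa using h.le
  · exact H _

theorem jtp_aux {p z w : ℂ} (hp0 : p ≠ 0) (hp : ‖p‖ < 1) (hpzw : p = z * w) (b : ℤ → ℂ)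
    (hb0 : b 0 = 1) (hb : ∀ j, b (j + 1) = -(w * p ^ j * b j)) (hs : Summable b) :
    HasSum b (qPochInf p p * qPochInf w p * qPochInf z p) := by
  have hw0 : w ≠ 0 := by rintro rfl; simp at hpzw; exact hp0 hpzw
  obtain ⟨M, hM, HM⟩ := ic_bdd hp
  have hbd : ∀ (n : ℕ) (j : ℤ), ‖b j * (ic p (n - j) * ic p (n + j))‖ ≤ ‖b j‖ * (M * M) := by
    intro n j
    simp only [norm_mul]
    gcongr
    exacts [HM _, HM _]
  have hsum : ∀ n : ℕ, Summable fun j : ℤ => b j * (ic p (n - j) * ic p (n + j)) := fun n =>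
    Summable.of_norm_bounded (hs.norm.mul_right (M * M)) (hbd n)
  set P : ℕ → ℂ := fun n => ∑' j : ℤ, b j * (ic p (n - j) * ic p (n + j)) with hP
  have hz : ∀ j, z * b (j + 1) = -(p ^ (j + 1) * b j) := by
    intro j
    rw [hb, zpow_add_one₀ hp0]
    linear_combination (-p ^ j * b j) * (- hpzw)
  have step : ∀ n : ℕ, (1 - p * p ^ (2 * n)) * (1 - p * p ^ (2 * n + 1)) * P (n + 1)
      = (1 - z * p ^ n) * (1 - w * p ^ n) * P n := by
    intro n
    have h := (hsum n).hasSum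
    have h1 := h.mul_left (w * p ^ n)
    have h2 := h.mul_left (z * p ^ n)
    have h3 := h.mul_left (1 + p ^ (2 * n + 1))
    rw [← (Equiv.subRight (1 : ℤ)).hasSum_iff] at h1
    rw [← (Equiv.addRight (1 : ℤ)).hasSum_iff] at h2
    have h4 := (h3.sub h1).sub h2
    have h5 := (hsum (n + 1)).hasSum.mul_left ((1 - p * p ^ (2 * n)) * (1 - p * p ^ (2 * n + 1)))
    have e : (1 - z * p ^ n) * (1 - w * p ^ n) * P n = (1 + p ^ (2 * n + 1)) * P n -
        w * p ^ n * P n - z * p ^ n * P n := by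
      have : p ^ (2 * n + 1) = z * w * p ^ n * p ^ n := by rw [← hpzw]; ring
      rw [this]; ring
    rw [e]
    refine h5.unique (Eq.subst (motive := fun f => HasSum f _) (funext fun j => ?_) h4)
    symm
    simp only [Function.comp, Equiv.subRight_apply, Equiv.coe_addRight]
    have a1 : w * b (j - 1) = -(p ^ (1 - j) * b j) := by
      have := hb (j - 1)
      rw [sub_add_cancel] at this
      rw [this, show (1 - j) = -(j - 1) by ring, zpow_neg]
      have : p ^ (j - 1) ≠ 0 := zpow_ne_zero _ hp0
      field_simp
    have a2 := hz j
    -- express everything through c (n+1) j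
    have r1 : ic p ((n : ℤ) - j) = (1 - p ^ ((n : ℤ) + 1 - j)) * ic p ((n : ℤ) + 1 - j) := by
      rw [← ic_rec hp]; congr 1; ring
    have r2 : ic p ((n : ℤ) + j) = (1 - p ^ ((n : ℤ) + 1 + j)) * ic p ((n : ℤ) + 1 + j) := by
      rw [← ic_rec hp]; congr 1; ring
    have r3 : ic p ((n : ℤ) - (j + 1)) = (1 - p ^ ((n : ℤ) - j)) * ic p ((n : ℤ) - j) := by
      rw [← ic_rec hp]; congr 1; ring
    have r4 : ic p ((n : ℤ) + (j - 1)) = (1 - p ^ ((n : ℤ) + j)) * ic p ((n : ℤ) + j) := by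
      rw [← ic_rec hp]; congr 1; ring
    have r5 : ic p ((n : ℤ) - (j - 1)) = ic p ((n : ℤ) + 1 - j) := by congr 1; ring
    have r6 : ic p ((n : ℤ) + (j + 1)) = ic p ((n : ℤ) + 1 + j) := by congr 1; ring
    have x1 : w * p ^ n * (b (j - 1) * (ic p ((n : ℤ) - (j - 1)) * ic p ((n : ℤ) + (j - 1)))) =
        -(p ^ (1 - j) * b j) * p ^ n * (ic p ((n : ℤ) - (j - 1)) * ic p ((n : ℤ) + (j - 1))) := by
      rw [← a1]; ring
    have x2 : z * p ^ n * (b (j + 1) * (ic p ((n : ℤ) - (j + 1)) * ic p ((n : ℤ) + (j + 1)))) =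
        -(p ^ (j + 1) * b j) * p ^ n * (ic p ((n : ℤ) - (j + 1)) * ic p ((n : ℤ) + (j + 1))) := by
      rw [← a2]; ring
    rw [x1, x2, r3, r4, r5, r6, r1, r2]
    push_cast
    have y1 : p ^ ((n : ℤ) + 1 - j) = p ^ n * p * (p ^ j)⁻¹ := by
      rw [zpow_sub₀ hp0, zpow_add_one₀ hp0, zpow_natCast]; rfl
    have y2 : p ^ ((n : ℤ) + 1 + j) = p ^ n * p * p ^ j := by
      rw [zpow_add₀ hp0, zpow_add_one₀ hp0, zpow_natCast]
    have y3 : p ^ ((n : ℤ) - j) = p ^ n * (p ^ j)⁻¹ := by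
      rw [zpow_sub₀ hp0, zpow_natCast]; rfl
    have y4 : p ^ ((n : ℤ) + j) = p ^ n * p ^ j := by
      rw [zpow_add₀ hp0, zpow_natCast]
    have y5 : p ^ (1 - j) = p * (p ^ j)⁻¹ := by
      rw [zpow_sub₀ hp0, zpow_one]; rfl
    have y6 : p ^ (j + 1) = p ^ j * p := zpow_add_one₀ hp0 j
    rw [y1, y2, y3, y4, y5, y6]
    have hX : p ^ j ≠ 0 := zpow_ne_zero _ hp0
    rw [show p ^ (2 * n + 1) = p * (p ^ n) ^ 2 by ring, show p ^ (2 * n) = (p ^ n) ^ 2 by ring]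
    generalize p ^ j = X at *
    generalize p ^ n = Y at *
    generalize ic p ((n : ℤ) + 1 - j) = I1 at *
    generalize ic p ((n : ℤ) + 1 + j) = I2 at *
    field_simp
    ring
  have P0 : P 0 = 1 := by
    simp only [hP]
    rw [tsum_eq_single 0]
    · simp [hb0, ic, qPoch]
    · intro j hj
      rcases lt_or_gt_of_ne hj with h | h
      · simp [ic, h]
      · simp [ic, h]
  have Pn : ∀ n, qPoch p p (2 * n) * P n = qPoch z p n * qPoch w p n := by
    intro n
    induction n with
    | zero => simp [qPoch, P0]
    | succ n ih =>
      rw [show 2 * (n + 1) = 2 * n + 1 + 1 by ring, qPoch_succ, qPoch_succ, qPoch_succ, qPoch_succ]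
      linear_combination qPoch p p (2 * n) * step n + (1 - z * p ^ n) * (1 - w * p ^ n) * ih
  have hne := qPochInf_ne hp hp
  have icl : Tendsto (fun m : ℤ => ic p m) atTop (𝓝 (qPochInf p p)⁻¹) := by
    have h1 : Tendsto (fun m : ℤ => (qPoch p p m.toNat)⁻¹) atTop (𝓝 (qPochInf p p)⁻¹) := by
      refine ((qPoch_tendsto p hp).inv₀ hne).comp ?_
      refine tendsto_atTop.2 fun N => ?_
      filter_upwards [eventually_ge_atTop (N : ℤ)] with m hm
      omega
    refine h1.congr' ?_
    filter_upwards [eventually_ge_atTop (0 : ℤ)] with m hm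
    simp [ic, not_lt.2 hm]
  have Plim : Tendsto P atTop (𝓝 (∑' j, b j * ((qPochInf p p)⁻¹ * (qPochInf p p)⁻¹))) := by
    refine tendsto_tsum_of_dominated_convergence (hs.norm.mul_right (M * M)) ?_
      (Eventually.of_forall hbd)
    intro j
    refine Tendsto.const_mul _ (Tendsto.mul (icl.comp ?_) (icl.comp ?_))
    · exact tendsto_atTop_add_const_right _ (-j) tendsto_natCast_atTop_atTop
    · exact tendsto_atTop_add_const_right _ j tendsto_natCast_atTop_atTop
  have l1 := ((qPoch_tendsto p hp).comp
    (tendsto_id.const_mul_atTop' (r := 2) (by norm_num))).mul Plim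
  have l2 := (qPoch_tendsto z hp).mul (qPoch_tendsto w hp)
  have := tendsto_nhds_unique l1 (l2.congr fun n => (Pn n).symm)
  rw [tsum_mul_right] at this
  convert hs.hasSum using 1
  field_simp at this
  rw [this]
  ring

theorem jtp_summable {q : ℂ} (hq : ‖q‖ < 1) (e : ℕ → ℕ) (he : ∀ n, n ≤ e n) (s : ℕ → ℂ)
    (hs : ∀ n, ‖s n‖ ≤ 1) :
    Summable fun n => s n * q ^ e n := by
  refine Summable.of_norm_bounded (summable_geometric_of_lt_one (norm_nonneg q) hq) fun n => ?_
  rw [norm_mul, norm_pow]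
  calc ‖s n‖ * ‖q‖ ^ e n ≤ 1 * ‖q‖ ^ n :=
        mul_le_mul (hs n) (pow_le_pow_of_le_one (norm_nonneg _) hq.le (he n)) (by positivity) zero_le_one
    _ = _ := one_mul _

theorem jtp (k : ℕ) {q : ℂ} (hq : ‖q‖ < 1) :
    HasSum (fun r : ℕ => (-1) ^ r * q ^ (2 * (k + 1) * r ^ 2 + (2 * k + 1) * r) * (1 - q ^ (2 * r + 1)))
      (qPochInf (q ^ (4 * (k + 1))) (q ^ (4 * (k + 1))) *
        qPochInf (q ^ (4 * (k + 1) - 1)) (q ^ (4 * (k + 1))) * qPochInf q (q ^ (4 * (k + 1)))) := by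
  by_cases h0 : q = 0
  · subst h0
    have h1 : ∀ x : ℂ, x = 0 → qPochInf x x = 1 := by
      rintro x rfl; simp [qPochInf]
    rw [zero_pow (by omega), zero_pow (by omega), h1 0 rfl]
    convert hasSum_ite_eq (0 : ℕ) (1 : ℂ) using 1
    · funext r
      rcases Nat.eq_zero_or_pos r with rfl | hr
      · simp
      · rw [zero_pow (by positivity)]
        simp [hr.ne']
    · simp
  set p := q ^ (4 * (k + 1)) with hp
  set b : ℤ → ℂ := fun j => (-1) ^ j * q ^ (2 * ((k : ℤ) + 1) * j ^ 2 + (2 * (k : ℤ) + 1) * j) with hb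
  have b1 : ∀ n : ℕ, b n = (-1) ^ n * q ^ (2 * (k + 1) * n ^ 2 + (2 * k + 1) * n) := by
    intro n
    simp only [hb]
    rw [zpow_natCast]
    congr 1
  have b2 : ∀ n : ℕ, b (-((n : ℤ) + 1)) =
      -(-1) ^ n * q ^ (2 * (k + 1) * n ^ 2 + (2 * k + 1) * n + (2 * n + 1)) := by
    intro n
    simp only [hb]
    rw [zpow_neg, zpow_add_one₀ (by norm_num), zpow_natCast]
    congr 1
    · rw [mul_inv]
      rcases neg_one_pow_eq_or ℂ n with h | h <;> rw [h] <;> norm_num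
    · rw [← zpow_natCast]
      congr 1
      push_cast
      ring
  have hs : Summable b := by
    refine Summable.of_nat_of_neg_add_one ?_ ?_
    · simp only [b1]
      exact jtp_summable hq _ (fun n => by nlinarith) _ (by simp)
    · simp only [b2]
      exact jtp_summable hq _ (fun n => by nlinarith) _ (by simp)
  have H := jtp_aux (p := p) (z := q) (w := q ^ (4 * (k + 1) - 1)) (pow_ne_zero _ h0)
    (by rw [hp, norm_pow]; exact pow_lt_one₀ (norm_nonneg _) hq (by omega))
    (by rw [hp, ← pow_succ']; congr 1) b (by simp [hb])
    (by
      intro j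
      simp only [hb, hp]
      rw [zpow_add_one₀ (by norm_num), ← zpow_natCast q (4 * (k + 1)), ← zpow_mul,
        ← zpow_natCast q (4 * (k + 1) - 1)]
      have : q ^ (2 * ((k : ℤ) + 1) * (j + 1) ^ 2 + (2 * (k : ℤ) + 1) * (j + 1)) =
          q ^ (((4 * (k + 1) - 1 : ℕ)) : ℤ) * q ^ (((4 * (k + 1) : ℕ) : ℤ) * j) *
          q ^ (2 * ((k : ℤ) + 1) * j ^ 2 + (2 * (k : ℤ) + 1) * j) := by
        rw [← zpow_add₀ h0, ← zpow_add₀ h0]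
        congr 1
        rw [Nat.cast_sub (by omega)]
        push_cast
        ring
      rw [this]
      ring) hs
  have H2 := H.nat_add_neg_add_one
  convert H2 using 1
  funext r
  rw [b1, b2, pow_add q _ (2 * r + 1)]
  ring

/-! Final summation -/

theorem rr_inner_sum {q : ℂ} (hq : ‖q‖ < 1) (r : ℕ) :
    ∑' m : ℕ, q ^ m * qPoch (-q) q (2 * (r + m)) *
      ((qPoch (q ^ 2) (q ^ 2) m)⁻¹ * (qPoch (q ^ 2) (q ^ 2) (r + m + r + 1))⁻¹) =
      qPochInf (-q) q / qPochInf q q / (1 + q ^ (2 * r + 1)) := by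
  have hQ := norm_sq_lt hq
  set A : ℂ := -q * q ^ (2 * r) with hA
  have hnq : ‖-q‖ < 1 := by simpa using hq
  have hA1 : ‖A‖ < 1 := norm_mul_pow_lt hnq hq _
  have hB1 : ‖A * q‖ < 1 := norm_mul_lt hA1.le hq
  have eABq : A * (A * q) * q = q ^ 2 * (q ^ 2) ^ (2 * r + 1) := by rw [hA]; ring
  have e : ∀ m, q ^ m * qPoch (-q) q (2 * (r + m)) *
      ((qPoch (q ^ 2) (q ^ 2) m)⁻¹ * (qPoch (q ^ 2) (q ^ 2) (r + m + r + 1))⁻¹) =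
      qPoch (-q) q (2 * r) * (qPoch (q ^ 2) (q ^ 2) (2 * r + 1))⁻¹ * gT A (A * q) (q ^ 2) q m := by
    intro m
    rw [gT, eABq, mul_add, qPoch_add, qPoch_two_mul _ _ m,
      show r + m + r + 1 = 2 * r + 1 + m by ring, qPoch_add (q ^ 2) (q ^ 2) (2 * r + 1), mul_inv]
    ring
  rw [tsum_congr e, tsum_mul_left]
  have g := q_gauss hA1.le hB1.le hQ hq
  rw [eABq, qPochInf_split (A * q) hq] at g
  have s1 := qPoch_mul_inf (q ^ 2) hQ (2 * r + 1)
  have s2 := qPoch_mul_inf (-q) hq (2 * r + 1)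
  have s3 := qPochInf_split q hq
  rw [show q * q = q ^ 2 by ring] at s3
  rw [show -q * q ^ (2 * r + 1) = A * q by rw [hA]; ring, qPoch_succ] at s2
  have n1 := qPochInf_ne (x := q) hq hQ
  have n2 := qPochInf_ne (norm_mul_pow_lt hQ hQ (2 * r + 1)) hQ
  have n3 := qPoch_ne hQ hQ (2 * r + 1)
  have n4 : 1 + q ^ (2 * r + 1) ≠ 0 := by
    have := one_sub_ne (norm_mul_pow_lt hnq hq (2 * r))
    rw [pow_succ']
    simpa using this
  have e5 : 1 - -q * q ^ (2 * r) = 1 + q ^ (2 * r + 1) := by ring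
  rw [e5] at s2
  rw [← s3, ← s1, ← s2, ← g]
  generalize 1 + q ^ (2 * r + 1) = D at *
  field_simp

theorem main_sum (k : ℕ) {q : ℂ} (hq : ‖q‖ < 1) :
    ∑' n : ℕ, q ^ n * qPoch (-q) q (2 * n) * bB (q ^ 2) k n =
      qPochInf (-q) q / qPochInf q q *
          (qPochInf (q ^ (4 * (k + 1))) (q ^ (4 * (k + 1))) *
            qPochInf (q ^ (4 * (k + 1) - 1)) (q ^ (4 * (k + 1))) *
            qPochInf q (q ^ (4 * (k + 1)))) := by
  have hQ := norm_sq_lt hq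
  have hnq : ‖-q‖ < 1 := by simpa using hq
  set al : ℕ → ℂ := fun r => (-1) ^ r * (q ^ 2) ^ (r ^ 2 + k * (r ^ 2 + r)) *
    (1 - (q ^ 2) ^ (2 * r + 1)) with hal
  set F : ℕ × ℕ → ℂ := fun x => al x.1 * q ^ x.1 * (q ^ x.2 * qPoch (-q) q (2 * (x.1 + x.2)) *
      ((qPoch (q ^ 2) (q ^ 2) x.2)⁻¹ * (qPoch (q ^ 2) (q ^ 2) (x.1 + x.2 + x.1 + 1))⁻¹)) with hF
  obtain ⟨K, hK, HK⟩ := qPoch_bdd (-q) hq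
  obtain ⟨M, hM, HM⟩ := qPoch_inv_bdd hQ hQ
  have hal2 : ∀ r, ‖al r‖ ≤ 2 := by
    intro r
    simp only [hal, norm_mul, norm_pow, norm_neg, norm_one, one_pow, one_mul]
    have h1 : (‖q‖ ^ 2) ^ (r ^ 2 + k * (r ^ 2 + r)) ≤ 1 :=
      pow_le_one₀ (by positivity) (pow_le_one₀ (norm_nonneg _) hq.le)
    have h2 : ‖1 - (q ^ 2) ^ (2 * r + 1)‖ ≤ 2 := by
      refine (norm_sub_le _ _).trans ?_
      rw [norm_one, norm_pow]
      have := pow_le_one₀ (n := 2 * r + 1) (norm_nonneg _) hQ.le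
      linarith
    calc _ ≤ 1 * (2 : ℝ) := by gcongr
      _ = 2 := by norm_num
  have hFs : Summable F := by
    have hg := summable_geometric_of_lt_one (norm_nonneg q) hq
    have hp := (hg.mul_of_nonneg hg (fun _ => by positivity) (fun _ => by positivity)).mul_left
      (2 * (K * (M * M)))
    refine Summable.of_norm_bounded hp fun x => ?_
    simp only [hF, norm_mul, norm_pow]
    calc _ ≤ 2 * ‖q‖ ^ x.1 * (‖q‖ ^ x.2 * K * (M * M)) := by
          gcongr
          exacts [hal2 _, HK _, HM _, HM _]
      _ = _ := by ring
  have t1 : ∑' x, F x = ∑' n : ℕ, q ^ n * qPoch (-q) q (2 * n) * bB (q ^ 2) k n := by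
    rw [← Finset.HasAntidiagonal.sigmaAntidiagonalEquivProd.tsum_eq F]
    have hs' := Finset.HasAntidiagonal.sigmaAntidiagonalEquivProd.summable_iff.2 hFs
    simp only [Function.comp_def] at hs'
    rw [hs'.tsum_sigma']
    · refine tsum_congr fun n => ?_
      rw [bailey_chain hQ, tsum_fintype]
      simp only [Finset.HasAntidiagonal.sigmaAntidiagonalEquivProd_apply]
      rw [Finset.sum_coe_sort (Finset.HasAntidiagonal.antidiagonal n) (fun x => F x),
        Finset.Nat.sum_antidiagonal_eq_sum_range_succ_mk, Finset.mul_sum]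
      refine Finset.sum_congr rfl fun r hr => ?_
      have hr' : r ≤ n := by simpa [Nat.lt_succ_iff] using hr
      obtain ⟨d, rfl⟩ := Nat.exists_eq_add_of_le hr'
      simp only [hF, hal]
      rw [show r + d - r = d by omega]
      ring
    · intro n
      exact (hasSum_fintype _).summable
  rw [← t1, hFs.tsum_prod, ← (jtp k hq).tsum_eq, ← tsum_mul_left]
  refine tsum_congr fun r => ?_
  simp only [hF]
  rw [tsum_mul_left, rr_inner_sum hq]
  have n4 : 1 + q ^ (2 * r + 1) ≠ 0 := by
    have := one_sub_ne (norm_mul_pow_lt hnq hq (2 * r))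
    rw [pow_succ']
    simpa using this
  have n5 := qPochInf_ne hq hq
  simp only [hal]
  rw [show (q ^ 2) ^ (2 * r + 1) = (q ^ (2 * r + 1)) ^ 2 by ring,
    show q ^ (2 * (k + 1) * r ^ 2 + (2 * k + 1) * r) =
      (q ^ 2) ^ (r ^ 2 + k * (r ^ 2 + r)) * q ^ r by ring]
  generalize q ^ (2 * r + 1) = Y at *
  field_simp
  ring

/-! Partitions -/

def pcons (k n : ℕ) (mu : PartK k) : PartK (k + 1) :=
  ⟨fun i => Nat.casesOn i (max n (mu.1 0)) (fun j => mu.1 j), by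
    refine ⟨antitone_nat_of_succ_le fun i => ?_, fun i hi => ?_⟩
    · cases i with
      | zero => exact le_max_right _ _
      | succ i => exact mu.2.1 (Nat.le_succ i)
    · cases i with
      | zero => omega
      | succ i => exact mu.2.2 i (by omega)⟩

def ptail (k : ℕ) (lam : PartK (k + 1)) : PartK k :=
  ⟨fun i => lam.1 (i + 1), fun _ _ h => lam.2.1 (by omega), fun i hi => lam.2.2 _ (by omega)⟩

def pzero : PartK 0 := ⟨fun _ => 0, fun _ _ _ => le_rfl, fun _ _ => rfl⟩

theorem pzero_apply (i : ℕ) : pzero.1 i = 0 := rfl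

theorem pcons_zero (k n : ℕ) (mu : PartK k) : (pcons k n mu).1 0 = max n (mu.1 0) := rfl

theorem pcons_succ (k n : ℕ) (mu : PartK k) (i : ℕ) : (pcons k n mu).1 (i + 1) = mu.1 i := rfl

theorem pcons_tail (k : ℕ) (lam : PartK (k + 1)) : pcons k (lam.1 0) (ptail k lam) = lam := by
  apply Subtype.ext
  funext i
  cases i with
  | zero => exact max_eq_left (lam.2.1 (Nat.zero_le 1))
  | succ i => rfl

theorem pcons_inj (k n : ℕ) : Function.Injective (pcons k n) := by
  intro a b h
  apply Subtype.ext
  funext i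
  have := congrArg (fun x : PartK (k + 1) => x.1 (i + 1)) h
  simpa [pcons_succ] using this

theorem part0_eq (lam : PartK 0) : lam = pzero := by
  apply Subtype.ext
  funext i
  exact lam.2.2 i (Nat.zero_le i)

open Classical in
noncomputable def FS : (k : ℕ) → ℕ → Finset (PartK (k + 1))
  | 0, n => {pcons 0 n pzero}
  | k + 1, n => (Finset.range (n + 1)).biUnion fun m => (FS k m).image (pcons (k + 1) n)

theorem mem_FS (k : ℕ) : ∀ (n : ℕ) (lam : PartK (k + 1)), lam ∈ FS k n ↔ lam.1 0 = n := by
  induction k with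
  | zero =>
    intro n lam
    simp only [FS, Finset.mem_singleton]
    constructor
    · rintro rfl; simp [pcons_zero, pzero_apply]
    · rintro rfl
      rw [← part0_eq (ptail 0 lam), pcons_tail]
  | succ k ih =>
    intro n lam
    simp only [FS, Finset.mem_biUnion, Finset.mem_image, Finset.mem_range, ih]
    constructor
    · rintro ⟨m, hm, mu, rfl, rfl⟩
      rw [pcons_zero]
      omega
    · rintro rfl
      refine ⟨lam.1 1, ?_, ptail _ lam, rfl, pcons_tail _ _⟩
      have := lam.2.1 (Nat.zero_le 1)
      omega

noncomputable def pW (Q : ℂ) (k : ℕ) (lam : PartK (k + 1)) : ℂ :=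
  Q ^ (∑ i ∈ Finset.range k, (lam.1 (i + 1) ^ 2 + lam.1 (i + 1))) *
    ((qPoch (-Q) Q (lam.1 k))⁻¹ * (pochK Q Q (k + 1) lam)⁻¹)

open Classical in
theorem FS_sum (Q : ℂ) (k : ℕ) : ∀ n, ∑ lam ∈ FS k n, pW Q k lam = bB Q k n := by
  induction k with
  | zero =>
    intro n
    have h1 : (pcons 0 n pzero).1 1 = 0 := rfl
    simp [FS, pW, bB, pochK, pcons_zero, h1, pzero_apply]
  | succ k ih =>
    intro n
    simp only [FS, bB]
    rw [Finset.sum_biUnion]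
    · refine Finset.sum_congr rfl fun m hm => ?_
      have hm' : m ≤ n := by simpa [Nat.lt_succ_iff] using hm
      rw [Finset.sum_image (fun a _ b _ h => pcons_inj _ _ h), ← ih m, Finset.mul_sum]
      refine Finset.sum_congr rfl fun mu hmu => ?_
      rw [mem_FS] at hmu
      simp only [pW, pochK]
      rw [Finset.sum_range_succ', Finset.prod_range_succ' _ (k + 1)]
      simp only [pcons_succ, pcons_zero, hmu, max_eq_left hm', mul_inv, pow_add]
      ring
    · intro a _ b _ hab
      refine Finset.disjoint_left.2 fun x hx hy => hab ?_
      simp only [Finset.mem_image, mem_FS] at hx hy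
      obtain ⟨u, hu, rfl⟩ := hx
      obtain ⟨v, hv, h⟩ := hy
      rw [← hu, ← hv, pcons_inj _ _ h]

theorem part_summable {x : ℝ} (h0 : 0 ≤ x) (h1 : x < 1) (k : ℕ) :
    Summable fun lam : PartK k => x ^ wtK k lam := by
  induction k with
  | zero =>
    have : Finite (PartK 0) := Finite.of_injective (fun _ => ()) fun a b _ => by
      rw [part0_eq a, part0_eq b]
    exact Summable.of_finite
  | succ k ih =>
    have h := (summable_geometric_of_lt_one h0 h1).mul_of_nonneg ih
      (fun _ => by positivity) (fun _ => by positivity)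
    have hi : Function.Injective fun lam : PartK (k + 1) => (lam.1 0, ptail k lam) := by
      intro a b hab
      simp only [Prod.mk.injEq] at hab
      rw [← pcons_tail k a, ← pcons_tail k b, hab.1, hab.2]
    refine (h.comp_injective hi).congr fun lam => ?_
    simp only [Function.comp, wtK, ptail]
    rw [Finset.sum_range_succ', pow_add, mul_comm]

theorem expo_eq (k : ℕ) (lam : PartK (k + 1)) :
    2 * wtK (k + 1) lam + 2 * n2K (k + 1) lam - (2 * lam.1 0 ^ 2 + lam.1 0) =
      lam.1 0 + 2 * ∑ i ∈ Finset.range k, (lam.1 (i + 1) ^ 2 + lam.1 (i + 1)) := by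
  simp only [wtK, n2K]
  rw [Finset.sum_range_succ', Finset.sum_range_succ', Finset.sum_add_distrib]
  omega

/-- Identity (18): for `k ≥ 1`, `|q| < 1`,
`Σ_{l(λ)≤k} q^{2|λ|+2n_2(λ)-2λ_1^2-λ_1} (-q;q)_{2λ_1} / ((-q^2;q^2)_{λ_k} (q^2;q^2)_λ)
  = ((-q;q)_∞/(q;q)_∞) (q^{4k},q^{4k-1},q;q^{4k})_∞`. -/
theorem rr_type_18 (k : ℕ) (hk : 1 ≤ k) (q : ℂ) (hq : ‖q‖ < 1) :
    ∑' lam : PartK k,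
        q ^ (2 * wtK k lam + 2 * n2K k lam - (2 * lam.1 0 ^ 2 + lam.1 0)) *
          qPoch (-q) q (2 * lam.1 0) /
          (qPoch (-q ^ 2) (q ^ 2) (lam.1 (k - 1)) * pochK (q ^ 2) (q ^ 2) k lam)
      = qPochInf (-q) q / qPochInf q q *
          (qPochInf (q ^ (4 * k)) (q ^ (4 * k)) *
            qPochInf (q ^ (4 * k - 1)) (q ^ (4 * k)) *
            qPochInf q (q ^ (4 * k))) := by
  obtain ⟨k, rfl⟩ : ∃ j, k = j + 1 := ⟨k - 1, by omega⟩
  have hQ := norm_sq_lt hq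
  rw [← main_sum k hq]
  set g : PartK (k + 1) → ℂ := fun lam =>
    q ^ lam.1 0 * qPoch (-q) q (2 * lam.1 0) * pW (q ^ 2) k lam with hg
  have e : ∀ lam : PartK (k + 1),
      q ^ (2 * wtK (k + 1) lam + 2 * n2K (k + 1) lam - (2 * lam.1 0 ^ 2 + lam.1 0)) *
          qPoch (-q) q (2 * lam.1 0) /
          (qPoch (-q ^ 2) (q ^ 2) (lam.1 (k + 1 - 1)) * pochK (q ^ 2) (q ^ 2) (k + 1) lam) = g lam := by
    intro lam
    simp only [hg, pW]
    rw [expo_eq, pow_add, pow_mul, Nat.add_sub_cancel, div_eq_mul_inv, mul_inv]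
    ring
  rw [tsum_congr e]
  have hgs : Summable g := by
    obtain ⟨K, hK, HK⟩ := qPoch_bdd (-q) hq
    obtain ⟨M, hM, HM⟩ := qPoch_inv_bdd hQ hQ
    obtain ⟨L, hL, HL⟩ := qPoch_inv_bdd (x := -q ^ 2) (by simpa using hQ) hQ
    refine Summable.of_norm_bounded ((part_summable (norm_nonneg q) hq (k + 1)).mul_left
      (K * (L * M ^ (k + 1)))) fun lam => ?_
    have hp : ‖(pochK (q ^ 2) (q ^ 2) (k + 1) lam)⁻¹‖ ≤ M ^ (k + 1) := by
      rw [pochK, ← Finset.prod_inv_distrib, norm_prod]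
      calc _ ≤ ∏ i ∈ Finset.range (k + 1), M :=
            Finset.prod_le_prod (fun _ _ => norm_nonneg _) fun _ _ => HM _
        _ = _ := by simp
    have hx : ‖q‖ ^ lam.1 0 * (‖q‖ ^ 2) ^ (∑ i ∈ Finset.range k,
        (lam.1 (i + 1) ^ 2 + lam.1 (i + 1))) ≤ ‖q‖ ^ wtK (k + 1) lam := by
      rw [← pow_mul, ← pow_add]
      refine pow_le_pow_of_le_one (norm_nonneg _) hq.le ?_
      rw [wtK, Finset.sum_range_succ', Finset.sum_add_distrib]
      omega
    simp only [hg, pW, norm_mul, norm_pow]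
    calc _ = (‖q‖ ^ lam.1 0 * (‖q‖ ^ 2) ^ (∑ i ∈ Finset.range k,
          (lam.1 (i + 1) ^ 2 + lam.1 (i + 1)))) * ‖qPoch (-q) q (2 * lam.1 0)‖ *
          (‖(qPoch (-q ^ 2) (q ^ 2) (lam.1 k))⁻¹‖ *
            ‖(pochK (q ^ 2) (q ^ 2) (k + 1) lam)⁻¹‖) := by ring
      _ ≤ ‖q‖ ^ wtK (k + 1) lam * K * (L * M ^ (k + 1)) := by
          gcongr
          exacts [HK _, HL _]
      _ = _ := by ring
  rw [← (hgs.hasSum.tsum_fiberwise (fun lam => lam.1 0)).tsum_eq]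
  refine tsum_congr fun n => ?_
  have hset : ((fun lam : PartK (k + 1) => lam.1 0) ⁻¹' {n}) = (FS k n : Set (PartK (k + 1))) := by
    ext lam
    simp [mem_FS]
  rw [hset, Finset.tsum_subtype' (FS k n) g, ← FS_sum, Finset.mul_sum]
  refine Finset.sum_congr rfl fun lam hl => ?_
  rw [mem_FS] at hl
  simp only [hg, hl]
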